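/- Let F be an associative A-algebra, B : Ω → F any map, and for a word ω = (ω₁,…,ω_r) set B_ω = B_{ω_r}⋯B_{ω₁} (product in F) and, for r ≥ 2, B_{[ω]} = [B_{ω_r},[B_{ω_{r−1}},[⋯[B_{ω₂},B_{ω₁}]⋯]]] (iterated commutators, [u,v] = uv − vu). Then for every alternal mould M with values in A, every finite subset Ω_f ⊆ Ω and every r ≥ 2, Σ_{ω∈Ω_f^r} M^ω B_ω = (1/r) Σ_{ω∈Ω_f^r} M^ω B_{[ω]}, where Ω_f^r denotes the set of words of length r with all letters in Ω_f. -/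

import Mathlib

/-! Statement 16: contraction of an alternal mould into a comould as a sum of iterated Lie brackets. -/

open scoped Classical

/-- Shuffle coefficient `sh(α, β; ω)`: the number of ways of obtaining `ω` by
interdigitating the letters of `α` and those of `β` while preserving their internal order. -/
noncomputable def sh {Ω : Type*} : List Ω → List Ω → List Ω → ℕ
  | [], [], [] => 1
  | _ :: _, _, [] => 0
  | [], _ :: _, [] => 0
  | [], [], _ :: _ => 0
  | [], b :: β, c :: ω => if b = c then sh [] β ω else 0
  | a :: α, [], c :: ω => if a = c then sh α [] ω else 0
  | a :: α, b :: β, c :: ω =>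
      (if a = c then sh α (b :: β) ω else 0) +
      (if b = c then sh (a :: α) β ω else 0)

/-- Mould multiplication `(M × N)^ω = Σ_{ω = ω¹·ω²} M^{ω¹} N^{ω²}`. -/
noncomputable def mmul {Ω A : Type*} [CommRing A] (M N : List Ω → A) : List Ω → A := fun ω =>
  ∑ i ∈ Finset.range (ω.length + 1), M (ω.take i) * N (ω.drop i)

/-- The unit mould `1^•`. -/
def munit {Ω A : Type*} [CommRing A] : List Ω → A := fun ω => match ω with | [] => 1 | _ => 0

/-- `Σ_ω sh(α,β;ω) M^ω`, realized as a finite sum over the permutations of `α ++ β`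
(the shuffle coefficient vanishes on any word which is not a permutation of `α ++ β`). -/
noncomputable def shSum {Ω A : Type*} [CommRing A] (M : List Ω → A) (α β : List Ω) : A :=
  ∑ ω ∈ (α ++ β).permutations.toFinset, sh α β ω • M ω

/-- A mould is alternal if `M^∅ = 0` and all the shuffle sums vanish. -/
def IsAlternal {Ω A : Type*} [CommRing A] (M : List Ω → A) : Prop :=
  M [] = 0 ∧ ∀ α β : List Ω, α ≠ [] → β ≠ [] → shSum M α β = 0

/-- A mould is symmetral if `M^∅ = 1` and the shuffle sums reproduce the products. -/
def IsSymmetral {Ω A : Type*} [CommRing A] (M : List Ω → A) : Prop :=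
  M [] = 1 ∧ ∀ α β : List Ω, α ≠ [] → β ≠ [] → shSum M α β = M α * M β

/-- `B_∅ = 1`, `B_{ω₁,…,ω_r} = B_{ω_r}⋯B_{ω₁}` (product in `F`). -/
def Bword {Ω F : Type*} [Ring F] (B : Ω → F) : List Ω → F
  | [] => 1
  | w :: ω => Bword B ω * B w

/-- Iterated commutators: applied to the reversed word `(ω_r,…,ω₁)` this computes
`B_{[ω]} = [B_{ω_r},[B_{ω_{r−1}},[⋯[B_{ω₂},B_{ω₁}]⋯]]]`, with `[u,v] = uv − vu`. -/
def lieWord {Ω F : Type*} [Ring F] (B : Ω → F) : List Ω → F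
  | [] => 0
  | [a] => B a
  | a :: b :: l => B a * lieWord B (b :: l) - lieWord B (b :: l) * B a

/-!
Expanding the nested commutators gives
`B_{[cω]} = Σ_{p,q} sh(p, q; ω) (-1)^{|p|} B_q B_c B_{p̃}`, where `p̃` is `p` reversed, and
`B_q B_c B_{p̃} = B_{p̃cq}`. Summing against `M` and exchanging the order of summation, the
coefficient of `B_{p̃cq}` becomes `(-1)^{|p|} Σ_ω sh(p, q; ω) M^{cω}`, and alternality, used to move
the letters of `p` one at a time past `c`, identifies it with `M^{p̃cq}`. Every word of length `r`
has exactly `r` factorizations `p̃cq`, which is where the factor `r` comes from.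
-/

open Finset.HasAntidiagonal (antidiagonal mem_antidiagonal)

section Shuffles

variable {Ω : Type*}

/-- The shuffles of two words, a word `ω` occurring `sh α β ω` times. -/
def shuffles : List Ω → List Ω → Multiset (List Ω)
  | [], β => {β}
  | a :: α, [] => {a :: α}
  | a :: α, b :: β =>
      (shuffles α (b :: β)).map (List.cons a) + (shuffles (a :: α) β).map (List.cons b)

/-- The ways of distributing the letters of a word into two subwords, the dual of `shuffles`:
`(α, β)` occurs `sh α β ω` times. -/
def unshuffles : List Ω → Multiset (List Ω × List Ω)
  | [] => {([], [])}
  | a :: ω =>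
      (unshuffles ω).map (Prod.map (List.cons a) id) +
        (unshuffles ω).map (Prod.map id (List.cons a))

theorem shuffles_nil_left (β : List Ω) : shuffles [] β = {β} := by
  simp only [shuffles]

theorem shuffles_nil_right (α : List Ω) : shuffles α [] = {α} := by
  cases α <;> simp only [shuffles]

theorem perm_append_of_mem_shuffles {α β ω : List Ω} (hω : ω ∈ shuffles α β) :
    ω.Perm (α ++ β) := by
  induction α, β using shuffles.induct generalizing ω with
  | case1 β => simp_all [shuffles]
  | case2 a α => simp_all [shuffles]
  | case3 a α b β ih_left ih_right =>
    simp only [shuffles, Multiset.mem_add, Multiset.mem_map] at hω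
    obtain ⟨ω, hω, rfl⟩ | ⟨ω, hω, rfl⟩ := hω
    · exact (ih_left hω).cons a
    · exact ((ih_right hω).cons b).trans List.perm_middle.symm

theorem count_cons_map_cons (a c : Ω) (ω : List Ω) (S : Multiset (List Ω)) :
    (S.map (List.cons a)).count (c :: ω) = if a = c then S.count ω else 0 := by
  split_ifs with hac
  · subst hac
    exact Multiset.count_map_eq_count' _ S List.cons_injective ω
  · exact Multiset.count_eq_zero.2 (by simp [hac])

theorem count_shuffles (α β ω : List Ω) : (shuffles α β).count ω = sh α β ω := by
  induction α, β, ω using sh.induct with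
  | case2 a α β => cases β <;> simp [sh, shuffles]
  | _ => simp_all [sh, shuffles, shuffles_nil_right, Multiset.count_singleton, count_cons_map_cons,
      eq_comm]

theorem shSum_eq_sum_shuffles {A : Type*} [CommRing A] (M : List Ω → A) (α β : List Ω) :
    shSum M α β = ((shuffles α β).map M).sum := by
  have hsub : (shuffles α β).toFinset ⊆ (α ++ β).permutations.toFinset := fun ω hω => by
    simpa using perm_append_of_mem_shuffles (Multiset.mem_toFinset.1 hω)
  rw [shSum, Finset.sum_multiset_map_count]
  simp only [← count_shuffles]
  refine (Finset.sum_subset hsub fun ω _ hω => ?_).symm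
  rw [Multiset.count_eq_zero.2 (mt Multiset.mem_toFinset.2 hω), zero_smul]

theorem IsAlternal.reverse_append_cons {A : Type*} [CommRing A] {M : List Ω → A}
    (hM : IsAlternal M) (p : List Ω) (c : Ω) (q : List Ω) :
    M (p.reverse ++ c :: q) =
      (-1 : ℤ) ^ p.length • ((shuffles p q).map fun ω => M (c :: ω)).sum := by
  induction p generalizing c q with
  | nil => simp [shuffles_nil_left]
  | cons d p ih =>
    have hshuffle : ((shuffles p (c :: q)).map fun ω => M (d :: ω)).sum =
        -((shuffles (d :: p) q).map fun ω => M (c :: ω)).sum := by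
      have := hM.2 (d :: p) (c :: q) (by simp) (by simp)
      rw [shSum_eq_sum_shuffles] at this
      simp only [shuffles, Multiset.map_add, Multiset.map_map, Multiset.sum_add,
        Function.comp_def] at this
      exact eq_neg_of_add_eq_zero_left this
    rw [List.reverse_cons, List.append_assoc, List.singleton_append, ih d (c :: q), hshuffle,
      List.length_cons, pow_succ, mul_neg_one, neg_smul, smul_neg]

end Shuffles

section WordSums

variable {Ω G : Type*} [AddCommMonoid G]

theorem sum_antidiagonal_succ_of_pascal {T L R : ℕ → ℕ → G}
    (h_zero_left : ∀ j, T 0 (j + 1) = R 0 j) (h_zero_right : ∀ i, T (i + 1) 0 = L i 0)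
    (h_succ_succ : ∀ i j, T (i + 1) (j + 1) = L i (j + 1) + R (i + 1) j) (k : ℕ) :
    ∑ ij ∈ antidiagonal (k + 1), T ij.1 ij.2 =
      ∑ ij ∈ antidiagonal k, L ij.1 ij.2 + ∑ ij ∈ antidiagonal k, R ij.1 ij.2 := by
  cases k with
  | zero => simp [Finset.Nat.antidiagonal_succ, h_zero_left, h_zero_right, add_comm]
  | succ k =>
    rw [Finset.Nat.sum_antidiagonal_succ, Finset.Nat.sum_antidiagonal_succ',
      Finset.Nat.sum_antidiagonal_succ' (f := fun ij => L ij.1 ij.2),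
      Finset.Nat.sum_antidiagonal_succ (f := fun ij => R ij.1 ij.2)]
    simp only [h_zero_left, h_zero_right, h_succ_succ, Finset.sum_add_distrib]
    abel

/-- The words of length `k` with letters in `s`. -/
def words (s : Finset Ω) : ℕ → Finset (List Ω)
  | 0 => {[]}
  | k + 1 => (s ×ˢ words s k).map
      ⟨fun x => x.1 :: x.2, fun _ _ h => Prod.ext (List.cons.inj h).1 (List.cons.inj h).2⟩

theorem sum_words_zero (s : Finset Ω) (f : List Ω → G) : ∑ ω ∈ words s 0, f ω = f [] := by
  simp [words]

theorem sum_words_succ (s : Finset Ω) (k : ℕ) (f : List Ω → G) :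
    ∑ ω ∈ words s (k + 1), f ω = ∑ a ∈ s, ∑ ω ∈ words s k, f (a :: ω) := by
  rw [words, Finset.sum_map, Finset.sum_product]
  rfl

theorem sum_ofFn_eq_sum_words (s : Finset Ω) (k : ℕ) (f : List Ω → G) :
    ∑ v : Fin k → s, f (List.ofFn fun i => (v i : Ω)) = ∑ ω ∈ words s k, f ω := by
  induction k generalizing f with
  | zero => simp [sum_words_zero]
  | succ k ih =>
    rw [sum_words_succ, ← (Fin.consEquiv fun _ : Fin (k + 1) => s).sum_comp,
      Fintype.sum_prod_type, ← Finset.sum_coe_sort s]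
    simp [Fin.consEquiv, List.ofFn_succ, ← ih]

theorem sum_words_reverse_append (s : Finset Ω) (i j : ℕ) (f : List Ω → G) :
    ∑ p ∈ words s i, ∑ q ∈ words s j, f (p.reverse ++ q) = ∑ ω ∈ words s (i + j), f ω := by
  induction i generalizing j with
  | zero => simp [sum_words_zero]
  | succ i ih =>
    rw [Nat.succ_add_eq_add_succ, ← ih, sum_words_succ, Finset.sum_comm]
    simp only [sum_words_succ, List.reverse_cons, List.append_assoc, List.singleton_append]

theorem sum_words_reverse_append_cons (s : Finset Ω) (k : ℕ) (f : List Ω → G) :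
    ∑ ij ∈ antidiagonal k, ∑ c ∈ s, ∑ p ∈ words s ij.1, ∑ q ∈ words s ij.2,
      f (p.reverse ++ c :: q) = (k + 1) • ∑ ω ∈ words s (k + 1), f ω := by
  have hblock (ij : ℕ × ℕ) (hij : ij ∈ antidiagonal k) :
      ∑ c ∈ s, ∑ p ∈ words s ij.1, ∑ q ∈ words s ij.2, f (p.reverse ++ c :: q) =
        ∑ ω ∈ words s (k + 1), f ω := by
    rw [← mem_antidiagonal.1 hij, add_assoc, ← sum_words_reverse_append, Finset.sum_comm]
    simp only [sum_words_succ]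
  rw [Finset.sum_congr rfl hblock, Finset.sum_const, Finset.Nat.card_antidiagonal]

theorem sum_words_shuffles_succ_succ (s : Finset Ω) (i j : ℕ)
    (f : List Ω → List Ω → List Ω → G) :
    ∑ p ∈ words s (i + 1), ∑ q ∈ words s (j + 1), ((shuffles p q).map fun ω => f ω p q).sum =
      ∑ a ∈ s, ∑ p ∈ words s i, ∑ q ∈ words s (j + 1),
          ((shuffles p q).map fun ω => f (a :: ω) (a :: p) q).sum +
        ∑ b ∈ s, ∑ p ∈ words s (i + 1), ∑ q ∈ words s j,
          ((shuffles p q).map fun ω => f (b :: ω) p (b :: q)).sum := by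
  rw [Finset.sum_comm (s := s) (t := words s (i + 1))]
  simp only [sum_words_succ, shuffles, Multiset.map_add, Multiset.map_map, Multiset.sum_add,
    Function.comp_def, Finset.sum_add_distrib]

theorem sum_words_sum_unshuffles (s : Finset Ω) (k : ℕ) (f : List Ω → List Ω → List Ω → G) :
    ∑ ω ∈ words s k, ((unshuffles ω).map fun π => f ω π.1 π.2).sum =
      ∑ ij ∈ antidiagonal k, ∑ p ∈ words s ij.1, ∑ q ∈ words s ij.2,
        ((shuffles p q).map fun ω => f ω p q).sum := by
  induction k generalizing f with
  | zero => simp [sum_words_zero, unshuffles, shuffles_nil_left]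
  | succ k ih =>
    let T (g : List Ω → List Ω → List Ω → G) (i j : ℕ) : G :=
      ∑ p ∈ words s i, ∑ q ∈ words s j, ((shuffles p q).map fun ω => g ω p q).sum
    let L (i j : ℕ) : G := ∑ a ∈ s, T (fun ω p q => f (a :: ω) (a :: p) q) i j
    let R (i j : ℕ) : G := ∑ a ∈ s, T (fun ω p q => f (a :: ω) p (a :: q)) i j
    have h_zero_left (j : ℕ) : T f 0 (j + 1) = R 0 j := by
      simp [T, R, sum_words_zero, sum_words_succ, shuffles_nil_left]
    have h_zero_right (i : ℕ) : T f (i + 1) 0 = L i 0 := by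
      simp [T, L, sum_words_zero, sum_words_succ, shuffles_nil_right]
    have h_succ_succ (i j : ℕ) : T f (i + 1) (j + 1) = L i (j + 1) + R (i + 1) j :=
      sum_words_shuffles_succ_succ s i j f
    calc ∑ ω ∈ words s (k + 1), ((unshuffles ω).map fun π => f ω π.1 π.2).sum
        = ∑ ij ∈ antidiagonal k, L ij.1 ij.2 + ∑ ij ∈ antidiagonal k, R ij.1 ij.2 := by
          rw [Finset.sum_comm, Finset.sum_comm (s := antidiagonal k) (t := s)]
          simp only [sum_words_succ, unshuffles, Multiset.map_add, Multiset.map_map,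
            Multiset.sum_add, Function.comp_def, Prod.map_fst, Prod.map_snd, id_eq,
            Finset.sum_add_distrib, T]
          simp only [← ih]
      _ = ∑ ij ∈ antidiagonal (k + 1), T f ij.1 ij.2 :=
          (sum_antidiagonal_succ_of_pascal h_zero_left h_zero_right h_succ_succ k).symm

end WordSums

section Brackets

variable {Ω F : Type*} [Ring F] (B : Ω → F)

/-- The nested commutator `[B_{ω_k}, [⋯ [B_{ω₁}, X] ⋯]]` for `ω = (ω₁, …, ω_k)`. -/
def adWord (ω : List Ω) (X : F) : F :=
  ω.foldl (fun Y a => ⁅B a, Y⁆) X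

theorem lieWord_append_singleton (ω : List Ω) (c : Ω) :
    lieWord B (ω ++ [c]) = ω.foldr (fun a Y => ⁅B a, Y⁆) (B c) := by
  induction ω with
  | nil => rfl
  | cons a ω ih =>
    rw [List.foldr_cons, ← ih, Ring.lie_def]
    cases ω <;> rfl

theorem lieWord_reverse_cons (c : Ω) (ω : List Ω) :
    lieWord B (c :: ω).reverse = adWord B ω (B c) := by
  rw [List.reverse_cons, lieWord_append_singleton, List.foldr_reverse, adWord]

theorem Bword_append (p q : List Ω) : Bword B (p ++ q) = Bword B q * Bword B p := by
  induction p with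
  | nil => simp [Bword]
  | cons a p ih => simp [Bword, ih, mul_assoc]

theorem adWord_eq_sum_unshuffles (ω : List Ω) (X : F) :
    adWord B ω X = ((unshuffles ω).map fun π =>
      (-1 : ℤ) ^ π.1.length • (Bword B π.2 * X * Bword B π.1.reverse)).sum := by
  induction ω generalizing X with
  | nil => simp [adWord, unshuffles, Bword]
  | cons a ω ih =>
    rw [adWord, List.foldl_cons, ← adWord, ih]
    simp only [unshuffles, Multiset.map_add, Multiset.map_map, Multiset.sum_add,
      Function.comp_def, Prod.map_fst, Prod.map_snd, id_eq, ← Multiset.sum_map_add]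
    refine congrArg Multiset.sum (Multiset.map_congr rfl fun π _ => ?_)
    simp only [Ring.lie_def, List.length_cons, pow_succ, List.reverse_cons, Bword_append, Bword,
      mul_sub, sub_mul, smul_sub, mul_neg_one, neg_smul, one_mul, mul_assoc]
    abel

theorem lieWord_reverse_cons_eq_sum_unshuffles (c : Ω) (ω : List Ω) :
    lieWord B (c :: ω).reverse = ((unshuffles ω).map fun π =>
      (-1 : ℤ) ^ π.1.length • Bword B (π.1.reverse ++ c :: π.2)).sum := by
  simp only [lieWord_reverse_cons, adWord_eq_sum_unshuffles, Bword_append, Bword]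

end Brackets

theorem IsAlternal.sum_words_smul_lieWord_reverse_cons {Ω A F : Type*} [CommRing A] [Ring F]
    [Module A F] {M : List Ω → A} (hM : IsAlternal M) (B : Ω → F) (s : Finset Ω) (k : ℕ) (c : Ω) :
    ∑ ω ∈ words s k, M (c :: ω) • lieWord B (c :: ω).reverse =
      ∑ ij ∈ antidiagonal k, ∑ p ∈ words s ij.1, ∑ q ∈ words s ij.2,
        M (p.reverse ++ c :: q) • Bword B (p.reverse ++ c :: q) := by
  simp only [lieWord_reverse_cons_eq_sum_unshuffles, Multiset.smul_sum, Multiset.map_map,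
    Function.comp_def]
  rw [sum_words_sum_unshuffles s k fun ω p q =>
    M (c :: ω) • (-1 : ℤ) ^ p.length • Bword B (p.reverse ++ c :: q)]
  simp only [hM.reverse_append_cons, smul_assoc, Multiset.sum_smul, Multiset.smul_sum,
    Multiset.map_map, Function.comp_def, smul_comm (M _)]

theorem stmt_16_general {Ω A F : Type*} [CommRing A] [Ring F] [Module A F]
    (B : Ω → F) (M : List Ω → A) (hM : IsAlternal M) (Ωf : Finset Ω) (r : ℕ) (hr : 1 ≤ r) :
    r • ∑ v : Fin r → Ωf, M (List.ofFn fun i => (v i : Ω)) • Bword B (List.ofFn fun i => (v i : Ω))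
      = ∑ v : Fin r → Ωf, M (List.ofFn fun i => (v i : Ω)) •
          lieWord B (List.ofFn fun i => (v i : Ω)).reverse := by
  obtain ⟨k, rfl⟩ := Nat.exists_eq_add_of_le' hr
  rw [sum_ofFn_eq_sum_words Ωf (k + 1) fun ω => M ω • Bword B ω,
    sum_ofFn_eq_sum_words Ωf (k + 1) fun ω => M ω • lieWord B ω.reverse,
    ← sum_words_reverse_append_cons, Finset.sum_comm, sum_words_succ]
  simp only [hM.sum_words_smul_lieWord_reverse_cons]

theorem stmt_16 {Ω A F : Type*} [Nonempty Ω] [CommRing A] [Algebra ℂ A]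
    [Ring F] [Algebra A F] [Algebra ℂ F] [IsScalarTower ℂ A F]
    (B : Ω → F) (M : List Ω → A) (hM : IsAlternal M) (Ωf : Finset Ω) (r : ℕ) (hr : 2 ≤ r) :
    ∑ v : Fin r → Ωf, M (List.ofFn fun i => (v i : Ω)) • Bword B (List.ofFn fun i => (v i : Ω))
      = (r : ℂ)⁻¹ •
        ∑ v : Fin r → Ωf, M (List.ofFn fun i => (v i : Ω)) •
          lieWord B (List.ofFn fun i => (v i : Ω)).reverse := by
  rw [← stmt_16_general B M hM Ωf r (by omega), ← Nat.cast_smul_eq_nsmul ℂ,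
    inv_smul_smul₀ (Nat.cast_ne_zero.2 (by omega))]
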